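/- Let E ∈ GL(m,k) and F ∈ GL(n,k). There exists an algebra homomorphism γ₁ : B(E) → B(E,F) ⊗ B(F,E) with γ₁(a_{ij}) = Σ_{k=1}^n z_{ik} ⊗ y_{kj} for all 1 ≤ i,j ≤ m, and an algebra homomorphism γ₂ : B(F) → B(F,E) ⊗ B(E,F) with γ₂(b_{ij}) = Σ_{k=1}^m y_{ik} ⊗ z_{kj} for all 1 ≤ i,j ≤ n, where a, b, z, y denote the matrices of generators of B(E), B(F), B(E,F), B(F,E) respectively. -/

import Mathlib

open scoped TensorProduct
open Matrix

noncomputable section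

variable (k : Type) [Field k]

/-- The matrix of free generators of the free algebra on `Fin m × Fin n`. -/
def gens (m n : ℕ) : Matrix (Fin m) (Fin n) (FreeAlgebra k (Fin m × Fin n)) :=
  Matrix.of fun i j => FreeAlgebra.ι k (i, j)

/-- A scalar matrix viewed as a matrix over a `k`-algebra. -/
def liftMat {A : Type} [Semiring A] [Algebra k A] {p q : ℕ}
    (M : Matrix (Fin p) (Fin q) k) : Matrix (Fin p) (Fin q) A :=
  M.map (algebraMap k A)

/-- The defining relations of the algebra `B(E,F)`:
`F⁻¹ * ᵀz * E * z = 1` and `z * F⁻¹ * ᵀz * E = 1`. -/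
inductive BRel {m n : ℕ} (E : Matrix (Fin m) (Fin m) k) (F : Matrix (Fin n) (Fin n) k) :
    FreeAlgebra k (Fin m × Fin n) → FreeAlgebra k (Fin m × Fin n) → Prop
  | left (i j : Fin n) : BRel E F
      ((liftMat k (A := FreeAlgebra k (Fin m × Fin n)) F⁻¹ * (gens k m n)ᵀ *
          liftMat k (A := FreeAlgebra k (Fin m × Fin n)) E * gens k m n :
          Matrix (Fin n) (Fin n) (FreeAlgebra k (Fin m × Fin n))) i j)
      ((1 : Matrix (Fin n) (Fin n) (FreeAlgebra k (Fin m × Fin n))) i j)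
  | right (i j : Fin m) : BRel E F
      ((gens k m n * liftMat k (A := FreeAlgebra k (Fin m × Fin n)) F⁻¹ * (gens k m n)ᵀ *
          liftMat k (A := FreeAlgebra k (Fin m × Fin n)) E :
          Matrix (Fin m) (Fin m) (FreeAlgebra k (Fin m × Fin n))) i j)
      ((1 : Matrix (Fin m) (Fin m) (FreeAlgebra k (Fin m × Fin n))) i j)

/-- The algebra `B(E,F)`.  The Hopf algebra `B(E)` is `BB k E E`. -/
abbrev BB {m n : ℕ} (E : Matrix (Fin m) (Fin m) k) (F : Matrix (Fin n) (Fin n) k) :=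
  RingQuot (BRel k E F)

/-- The matrix of generators of `B(E,F)`. -/
def ZMat {m n : ℕ} (E : Matrix (Fin m) (Fin m) k) (F : Matrix (Fin n) (Fin n) k) :
    Matrix (Fin m) (Fin n) (BB k E F) :=
  Matrix.of fun i j => RingQuot.mkAlgHom k (BRel k E F) (gens k m n i j)

theorem liftMat_mapHom {A B : Type} [Semiring A] [Algebra k A] [Semiring B] [Algebra k B]
    (f : A →ₐ[k] B) {p q : ℕ} (M : Matrix (Fin p) (Fin q) k) :
    (liftMat k (A := A) M).map f = liftMat k (A := B) M := by
  ext i j; simp [liftMat]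

theorem liftMat_mul' {A : Type} [Semiring A] [Algebra k A]
    {p q r : ℕ} (M : Matrix (Fin p) (Fin q) k) (N : Matrix (Fin q) (Fin r) k) :
    liftMat k (A := A) (M * N) = liftMat k (A := A) M * liftMat k (A := A) N := by
  simp only [liftMat, Matrix.map_mul]

theorem liftMat_one' {A : Type} [Semiring A] [Algebra k A] {p : ℕ} :
    liftMat k (A := A) (1 : Matrix (Fin p) (Fin p) k) = 1 := by
  simp [liftMat]

theorem mapHom_mul {A B : Type} [Semiring A] [Algebra k A] [Semiring B] [Algebra k B]
    (f : A →ₐ[k] B) {p q r : ℕ} (M : Matrix (Fin p) (Fin q) A) (N : Matrix (Fin q) (Fin r) A) :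
    (M * N).map f = M.map f * N.map f := by
  ext i j; simp [Matrix.mul_apply]

theorem mapHom_one {A B : Type} [Semiring A] [Algebra k A] [Semiring B] [Algebra k B]
    (f : A →ₐ[k] B) {p : ℕ} :
    (1 : Matrix (Fin p) (Fin p) A).map f = 1 := by
  ext i j; simp [Matrix.one_apply, apply_ite f]

theorem BB_lift {m n : ℕ} (E : Matrix (Fin m) (Fin m) k) (F : Matrix (Fin n) (Fin n) k)
    {A : Type} [Semiring A] [Algebra k A] (x : Matrix (Fin m) (Fin n) A)
    (h1 : liftMat k (A := A) F⁻¹ * xᵀ * liftMat k (A := A) E * x = 1)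
    (h2 : x * liftMat k (A := A) F⁻¹ * xᵀ * liftMat k (A := A) E = 1) :
    ∃ γ : BB k E F →ₐ[k] A, ∀ i j, γ (ZMat k E F i j) = x i j := by
  let f : FreeAlgebra k (Fin m × Fin n) →ₐ[k] A := FreeAlgebra.lift k fun p => x p.1 p.2
  have hg : (gens k m n).map f = x := by
    ext i j; simp [gens, f]
  have hgt : (gens k m n)ᵀ.map f = xᵀ := by
    rw [← hg]; rfl
  refine ⟨RingQuot.liftAlgHom k ⟨f, ?_⟩, ?_⟩
  · intro a b hab
    cases hab with
    | left i j =>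
      rw [← Matrix.map_apply (f := f), ← Matrix.map_apply (f := f)]
      rw [mapHom_mul, mapHom_mul, mapHom_mul, mapHom_one, liftMat_mapHom, liftMat_mapHom, hg, hgt,
        h1]
    | right i j =>
      rw [← Matrix.map_apply (f := f), ← Matrix.map_apply (f := f)]
      rw [mapHom_mul, mapHom_mul, mapHom_mul, mapHom_one, liftMat_mapHom, liftMat_mapHom, hg, hgt,
        h2]
  · intro i j
    simp only [ZMat, Matrix.of_apply, RingQuot.liftAlgHom_mkAlgHom_apply]
    rw [← Matrix.map_apply (f := f), hg]

theorem ZMat_map_rel {m n : ℕ} (E : Matrix (Fin m) (Fin m) k) (F : Matrix (Fin n) (Fin n) k)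
    {A : Type} [Semiring A] [Algebra k A] (g : BB k E F →ₐ[k] A) :
    (liftMat k (A := A) F⁻¹ * ((ZMat k E F).map g)ᵀ * liftMat k (A := A) E * (ZMat k E F).map g = 1) ∧
    ((ZMat k E F).map g * liftMat k (A := A) F⁻¹ * ((ZMat k E F).map g)ᵀ * liftMat k (A := A) E = 1) := by
  let f := g.comp (RingQuot.mkAlgHom k (BRel k E F))
  have hg : (gens k m n).map f = (ZMat k E F).map g := by
    ext i j; simp [ZMat, f]
  have hgt : (gens k m n)ᵀ.map f = ((ZMat k E F).map g)ᵀ := by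
    rw [← hg]; rfl
  constructor
  · rw [← hgt, ← hg, ← liftMat_mapHom k f, ← liftMat_mapHom k f, ← mapHom_mul, ← mapHom_mul,
      ← mapHom_mul, ← mapHom_one k f]
    ext i j
    exact congrArg g (RingQuot.mkAlgHom_rel k (BRel.left i j))
  · rw [← hgt, ← hg, ← liftMat_mapHom k f, ← liftMat_mapHom k f, ← mapHom_mul, ← mapHom_mul,
      ← mapHom_mul, ← mapHom_one k f]
    ext i j
    exact congrArg g (RingQuot.mkAlgHom_rel k (BRel.right i j))

theorem BB_gamma_aux {m n : ℕ}
    (E : Matrix (Fin m) (Fin m) k) (F : Matrix (Fin n) (Fin n) k)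
    (hF : IsUnit F.det) :
    ∃ γ₁ : BB k E E →ₐ[k] (BB k E F ⊗[k] BB k F E),
      ∀ i j, γ₁ (ZMat k E E i j) = ∑ l, ZMat k E F i l ⊗ₜ[k] ZMat k F E l j := by
  let gl : BB k E F →ₐ[k] (BB k E F ⊗[k] BB k F E) := Algebra.TensorProduct.includeLeft
  let gr : BB k F E →ₐ[k] (BB k E F ⊗[k] BB k F E) := Algebra.TensorProduct.includeRight
  obtain ⟨z1, z2⟩ := ZMat_map_rel k E F gl
  obtain ⟨y1, y2⟩ := ZMat_map_rel k F E gr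
  have hc : ((ZMat k E F).map gl * (ZMat k F E).map gr)ᵀ =
      ((ZMat k F E).map gr)ᵀ * ((ZMat k E F).map gl)ᵀ := by
    ext i j
    simp [Matrix.mul_apply, gl, gr]
  have hx : ∀ i j, ((ZMat k E F).map gl * (ZMat k F E).map gr) i j =
      ∑ l, ZMat k E F i l ⊗ₜ[k] ZMat k F E l j := by
    intro i j
    simp [Matrix.mul_apply, gl, gr]
  simp only [← hx]
  generalize (ZMat k E F).map gl = z at *
  generalize (ZMat k F E).map gr = y at *
  have f1 : liftMat k (A := BB k E F ⊗[k] BB k F E) F * liftMat k (A := BB k E F ⊗[k] BB k F E) F⁻¹ = 1 := by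
    rw [← liftMat_mul', Matrix.mul_nonsing_inv _ hF, liftMat_one']
  have hz : zᵀ * (liftMat k (A := BB k E F ⊗[k] BB k F E) E * z) = liftMat k (A := BB k E F ⊗[k] BB k F E) F := by
    have := congrArg (fun M => liftMat k (A := BB k E F ⊗[k] BB k F E) F * M) z1
    simpa only [← Matrix.mul_assoc, f1, Matrix.one_mul, Matrix.mul_one] using this
  have hy : y * (liftMat k (A := BB k E F ⊗[k] BB k F E) E⁻¹ * yᵀ) = liftMat k (A := BB k E F ⊗[k] BB k F E) F⁻¹ := by
    have := congrArg (fun M => M * liftMat k (A := BB k E F ⊗[k] BB k F E) F⁻¹) y2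
    simpa only [Matrix.mul_assoc, f1, Matrix.one_mul, Matrix.mul_one] using this
  apply BB_lift
  · rw [hc, ← y1, ← hz]
    simp only [Matrix.mul_assoc]
  · rw [hc, ← z2, ← hy]
    simp only [Matrix.mul_assoc]

/-- **Statement 7.** There are algebra homomorphisms
`γ₁ : B(E) → B(E,F) ⊗ B(F,E)` with `γ₁(a i j) = ∑ l, z i l ⊗ y l j` and
`γ₂ : B(F) → B(F,E) ⊗ B(E,F)` with `γ₂(b i j) = ∑ l, y i l ⊗ z l j`. -/
theorem BB_gamma_homs {m n : ℕ}
    (E : Matrix (Fin m) (Fin m) k) (F : Matrix (Fin n) (Fin n) k)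
    (hE : IsUnit E.det) (hF : IsUnit F.det) :
    (∃ γ₁ : BB k E E →ₐ[k] (BB k E F ⊗[k] BB k F E),
      ∀ i j, γ₁ (ZMat k E E i j) = ∑ l, ZMat k E F i l ⊗ₜ[k] ZMat k F E l j) ∧
    (∃ γ₂ : BB k F F →ₐ[k] (BB k F E ⊗[k] BB k E F),
      ∀ i j, γ₂ (ZMat k F F i j) = ∑ l, ZMat k F E i l ⊗ₜ[k] ZMat k E F l j) := by
  exact ⟨BB_gamma_aux k E F hF, BB_gamma_aux k F E hE⟩
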